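/- The matrix B has an orthogonal basis of eigenvectors such that exactly ν−1 of them lie in the kernel of B, exactly one of the remaining eigenvectors has eigenvalue lying between rω^{ν−1}νk^{ν−1} and Rνk^{ν−1}, and all other eigenvalues lie between rω^{ν−1}k^{ν−1} and Rk^{ν−1}. -/

import Mathlib

open MeasureTheory Real InnerProductSpace

noncomputable section

variable {ν : ℕ}

/-- The coordinate index set of `ℝ^d`, `d = k_1 + ⋯ + k_ν`. -/
abbrev Idx (kk : Fin ν → ℕ) : Type := Σ j : Fin ν, Fin (kk j)

/-- The multi-index set, of cardinality `n = k_1 ⋯ k_ν`. -/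
abbrev MIdx (kk : Fin ν → ℕ) : Type := ∀ j : Fin ν, Fin (kk j)

/-- The ambient Euclidean space `ℝ^d`. -/
abbrev Spc (kk : Fin ν → ℕ) : Type := EuclideanSpace ℝ (Idx kk)

/-- The coordinate functional `t ↦ τ_{j,i}`. -/
def coordL (kk : Fin ν → ℕ) (p : Idx kk) : Spc kk →ₗ[ℝ] ℝ where
  toFun t := t p
  map_add' _ _ := rfl
  map_smul' _ _ := rfl

/-- The linear functional `t ↦ ⟨a_m, t⟩ = τ_{1,m_1} + ⋯ + τ_{ν,m_ν}`. -/
def linF (kk : Fin ν → ℕ) (m : MIdx kk) : Spc kk →ₗ[ℝ] ℝ :=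
  ∑ j : Fin ν, coordL kk ⟨j, m j⟩

/-- The column `a_m` of the constraint matrix `A`. -/
def colA (kk : Fin ν → ℕ) (m : MIdx kk) : Spc kk :=
  (WithLp.equiv 2 (Idx kk → ℝ)).symm (fun p => if p.2 = m p.1 then 1 else 0)

/-- The quadratic form `q(t) = (1/2) ∑_m α_m (τ_{1,m_1} + ⋯ + τ_{ν,m_ν})²`. -/
def qform (kk : Fin ν → ℕ) (α : MIdx kk → ℝ) (t : Spc kk) : ℝ :=
  (1/2) * ∑ m : MIdx kk, α m * (linF kk m t)^2

/-- The symmetric positive semidefinite matrix `B` with `q(t) = (1/2)⟨t, Bt⟩`,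
given explicitly as `B = ∑_m α_m a_m a_mᵀ`. -/
def Bmat (kk : Fin ν → ℕ) (α : MIdx kk → ℝ) : Spc kk →ₗ[ℝ] Spc kk :=
  ∑ m : MIdx kk, α m • (linF kk m).smulRight (colA kk m)

/-- The sup norm `‖t‖_∞`. -/
def supNorm (kk : Fin ν → ℕ) (t : Spc kk) : ℝ := ‖(WithLp.equiv 2 (Idx kk → ℝ)) t‖

/-- The subspace `ℒ = {t : τ_{j,k_j} = 0 for j = 2,…,ν}`. -/
def Lsub (kk : Fin ν → ℕ) (hk : ∀ j, 0 < kk j) : Submodule ℝ (Spc kk) :=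
  ⨅ (j : {j : Fin ν // (j : ℕ) ≠ 0}),
    LinearMap.ker (coordL kk ⟨j.1, ⟨kk j.1 - 1, Nat.sub_lt (hk j.1) one_pos⟩⟩)

/-!
Write `N = k_1 ⋯ k_ν` and let the `m_j` be independent and uniformly distributed. Then
`∑_m (τ_{1,m_1} + ⋯ + τ_{ν,m_ν})²` is `N` times the second moment of a sum of independent random
variables, that is, `N` times the square of the sum of the block means of `t` plus the sum of the
block variances. The bounds `r ≤ α_m ≤ R` reduce `⟨t, Bt⟩` to this form, and the form is compared
with `‖t‖²` on two subspaces and their orthogonal complements: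

* it vanishes on the block-constant vectors with `c_1 + ⋯ + c_ν = 0`, and orthogonally to them all
  block sums agree, so that the squared sum of the means dominates the sum of their squares;
* on the line through the block-constant vector with values `1 / k_j` it is of the maximal order
  `ν N / k_j`, which Cauchy-Schwarz bounds from above everywhere, and orthogonally to that line the
  block means sum to zero.

The Courant-Fischer principle turns these four estimates into bounds on the ordered eigenvalues.
-/

theorem exists_perm_fin_val_eq_sub {d n : ℕ} (hn : n < d) :
    ∃ σ : Equiv.Perm (Fin d), (∀ i : Fin d, (i : ℕ) < n → (σ i : ℕ) = d + i - n) ∧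
      ∀ i : Fin d, n ≤ (i : ℕ) → (σ i : ℕ) = i - n := by
  have : NeZero d := ⟨hn.ne_bot⟩
  exact ⟨Equiv.subRight ⟨n, hn⟩, fun i hi => Fin.coe_sub_iff_lt.2 hi,
    fun i hi => Fin.sub_val_of_le hi⟩

section Rayleigh

variable {𝕜 E : Type*} [RCLike 𝕜] [NormedAddCommGroup E] [InnerProductSpace 𝕜 E]

theorem exists_mem_ne_zero_forall_inner_eq_zero {ι : Type*} (v : ι → E) (s : Finset ι)
    (U : Submodule 𝕜 E) [FiniteDimensional 𝕜 U] (hs : s.card < Module.finrank 𝕜 U) :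
    ∃ x ∈ U, x ≠ 0 ∧ ∀ i ∈ s, ⟪v i, x⟫_𝕜 = 0 := by
  let f : U →ₗ[𝕜] (s → 𝕜) := LinearMap.pi fun i => (innerₛₗ 𝕜 (v i)).comp U.subtype
  have hf : LinearMap.ker f ≠ ⊥ := LinearMap.ker_ne_bot_of_finrank_lt (by simpa using hs)
  obtain ⟨x, hxf, hx0⟩ := (Submodule.ne_bot_iff _).mp hf
  exact ⟨x, x.2, by simpa using hx0, fun i hi => congrFun (LinearMap.mem_ker.1 hxf) ⟨i, hi⟩⟩

variable [FiniteDimensional 𝕜 E] {n : ℕ} {T : E →ₗ[𝕜] E} (hT : T.IsSymmetric)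
  (hn : Module.finrank 𝕜 E = n)

include hT hn

theorem re_inner_apply_self_eq_sum_eigenvalues (x : E) :
    RCLike.re ⟪T x, x⟫_𝕜 =
      ∑ i, hT.eigenvalues hn i * ‖⟪hT.eigenvectorBasis hn i, x⟫_𝕜‖ ^ 2 := by
  rw [← (hT.eigenvectorBasis hn).sum_inner_mul_inner, map_sum]
  refine Finset.sum_congr rfl fun i _ => ?_
  rw [hT, hT.apply_eigenvectorBasis, inner_smul_right, mul_assoc, RCLike.re_ofReal_mul,
    inner_mul_symm_re_eq_norm, norm_mul, norm_inner_symm, pow_two]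

theorem eigenvalues_le_of_forall_mem_submodule {U : Submodule 𝕜 E} {C : ℝ} {i : Fin n}
    (hi : n ≤ Module.finrank 𝕜 U + i) (hU : ∀ x ∈ U, RCLike.re ⟪T x, x⟫_𝕜 ≤ C * ‖x‖ ^ 2) :
    hT.eigenvalues hn i ≤ C := by
  obtain ⟨x, hxU, hx0, hx⟩ := exists_mem_ne_zero_forall_inner_eq_zero (hT.eigenvectorBasis hn)
    (Finset.Ioi i) U (by rw [Fin.card_Ioi]; lia)
  have hle : hT.eigenvalues hn i * ‖x‖ ^ 2 ≤ RCLike.re ⟪T x, x⟫_𝕜 := by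
    rw [re_inner_apply_self_eq_sum_eigenvalues hT hn,
      ← (hT.eigenvectorBasis hn).sum_sq_norm_inner_right, Finset.mul_sum]
    refine Finset.sum_le_sum fun j _ => ?_
    rcases lt_or_ge i j with hij | hji
    · simp [hx j (Finset.mem_Ioi.2 hij)]
    · exact mul_le_mul_of_nonneg_right (hT.eigenvalues_antitone hn hji) (sq_nonneg _)
  exact le_of_mul_le_mul_right (hle.trans (hU x hxU)) (by positivity)

theorem le_eigenvalues_of_forall_mem_submodule {U : Submodule 𝕜 E} {C : ℝ} {i : Fin n}
    (hi : i < Module.finrank 𝕜 U) (hU : ∀ x ∈ U, C * ‖x‖ ^ 2 ≤ RCLike.re ⟪T x, x⟫_𝕜) :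
    C ≤ hT.eigenvalues hn i := by
  obtain ⟨x, hxU, hx0, hx⟩ := exists_mem_ne_zero_forall_inner_eq_zero (hT.eigenvectorBasis hn)
    (Finset.Iio i) U (by rwa [Fin.card_Iio])
  have hle : RCLike.re ⟪T x, x⟫_𝕜 ≤ hT.eigenvalues hn i * ‖x‖ ^ 2 := by
    rw [re_inner_apply_self_eq_sum_eigenvalues hT hn,
      ← (hT.eigenvectorBasis hn).sum_sq_norm_inner_right, Finset.mul_sum]
    refine Finset.sum_le_sum fun j _ => ?_
    rcases lt_or_ge j i with hji | hij
    · simp [hx j (Finset.mem_Iio.2 hji)]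
    · exact mul_le_mul_of_nonneg_right (hT.eigenvalues_antitone hn hij) (sq_nonneg _)
  exact le_of_mul_le_mul_right ((hU x hxU).trans hle) (by positivity)

end Rayleigh

section ProductExpectation

open scoped BigOperators

variable {ι : Type*} [Fintype ι] [DecidableEq ι] {κ : ι → Type*} [∀ i, Fintype (κ i)]

theorem expect_pi_prod_eval {K : Type*} [Semifield K] [CharZero K] (f : ∀ i, κ i → K) :
    𝔼 m : ∀ i, κ i, ∏ i, f i (m i) = ∏ i, 𝔼 x, f i x := by
  simp only [Fintype.expect_eq_sum_div_card, Finset.prod_div_distrib, Fintype.prod_sum,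
    Fintype.card_pi, Nat.cast_prod]

variable [∀ i, Nonempty (κ i)]

theorem expect_pi_eval {K : Type*} [Semifield K] [CharZero K] (i : ι) (f : κ i → K) :
    𝔼 m : ∀ i, κ i, f (m i) = 𝔼 x, f x := by
  have h := expect_pi_prod_eval (Function.update (fun _ _ => (1 : K)) i f)
  rw [Fintype.prod_eq_single i fun l hl => by simp [hl], Function.update_self] at h
  rw [← h]
  refine Finset.expect_congr rfl fun m _ => ?_
  rw [Fintype.prod_eq_single i fun l hl => by simp [hl], Function.update_self]

theorem expect_pi_eval_mul_eval {K : Type*} [Semifield K] [CharZero K] {i j : ι} (hij : i ≠ j)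
    (f : κ i → K) (g : κ j → K) :
    𝔼 m : ∀ l, κ l, f (m i) * g (m j) = (𝔼 x, f x) * 𝔼 y, g y := by
  have h := expect_pi_prod_eval
    (Function.update (Function.update (fun _ _ => (1 : K)) i f) j g)
  rw [Fintype.prod_eq_mul i j hij fun l hl => by simp [hl.1, hl.2]] at h
  simp only [Function.update_self, Function.update_of_ne hij] at h
  rw [← h]
  refine Finset.expect_congr rfl fun m _ => ?_
  rw [Fintype.prod_eq_mul i j hij fun l hl => by simp [hl.1, hl.2]]
  simp only [Function.update_self, Function.update_of_ne hij]

theorem expect_pi_sq_sum_eval {K : Type*} [Field K] [CharZero K] (f : ∀ i, κ i → K) :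
    𝔼 m : ∀ i, κ i, (∑ i, f i (m i)) ^ 2 =
      (∑ i, 𝔼 x, f i x) ^ 2 + ∑ i, (𝔼 x, f i x ^ 2 - (𝔼 x, f i x) ^ 2) := by
  have hpair (i j : ι) : 𝔼 m : ∀ i, κ i, f i (m i) * f j (m j) =
      (𝔼 x, f i x) * (𝔼 x, f j x) +
        if i = j then 𝔼 x, f i x ^ 2 - (𝔼 x, f i x) ^ 2 else 0 := by
    split_ifs with hij
    · subst hij
      simp only [← pow_two, expect_pi_eval i fun x => f i x ^ 2, add_sub_cancel]
    · rw [expect_pi_eval_mul_eval hij, add_zero]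
  simp only [pow_two (∑ _, _), Finset.sum_mul_sum, Finset.expect_sum_comm, hpair,
    Finset.sum_add_distrib, Finset.sum_ite_eq, Finset.mem_univ, if_true]

end ProductExpectation

section Bmat

variable (kk : Fin ν → ℕ) (α : MIdx kk → ℝ) (m : MIdx kk) (t : Spc kk)

theorem linF_apply : linF kk m t = ∑ j, t ⟨j, m j⟩ := by
  rw [linF, LinearMap.sum_apply]
  rfl

theorem inner_colA_right : ⟪t, colA kk m⟫_ℝ = linF kk m t := by
  simp [linF_apply, PiLp.inner_apply, Fintype.sum_sigma, colA]

theorem inner_bmat_left (s t : Spc kk) :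
    ⟪Bmat kk α s, t⟫_ℝ = ∑ m, α m * (linF kk m s * linF kk m t) := by
  simp only [Bmat, LinearMap.sum_apply, LinearMap.smul_apply, LinearMap.smulRight_apply,
    sum_inner, real_inner_smul_left, real_inner_comm t (colA kk _), inner_colA_right]

theorem isSymmetric_bmat : (Bmat kk α).IsSymmetric := fun s t => by
  rw [real_inner_comm _ s, inner_bmat_left, inner_bmat_left]
  simp only [mul_comm (linF kk _ s)]

theorem inner_bmat_self : ⟪Bmat kk α t, t⟫_ℝ = ∑ m, α m * linF kk m t ^ 2 := by
  simp only [inner_bmat_left, pow_two]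

variable {kk α}

theorem mul_sum_sq_linF_le_inner_bmat {r : ℝ} (hα : ∀ m, r ≤ α m) :
    r * ∑ m, linF kk m t ^ 2 ≤ ⟪Bmat kk α t, t⟫_ℝ := by
  rw [inner_bmat_self, Finset.mul_sum]
  gcongr with m
  exact hα m

theorem inner_bmat_le_mul_sum_sq_linF {R : ℝ} (hα : ∀ m, α m ≤ R) :
    ⟪Bmat kk α t, t⟫_ℝ ≤ R * ∑ m, linF kk m t ^ 2 := by
  rw [inner_bmat_self, Finset.mul_sum]
  gcongr with m
  exact hα m

end Bmat

section BlockConst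

variable (kk : Fin ν → ℕ)

/-- The vector of `ℝ^d` with `τ_{j,i} = c_j` for all `i`, as a linear function of `c`. -/
def blockConst : (Fin ν → ℝ) →ₗ[ℝ] Spc kk where
  toFun c := WithLp.toLp 2 fun p => c p.1
  map_add' _ _ := rfl
  map_smul' _ _ := rfl

theorem blockConst_apply (c : Fin ν → ℝ) (p : Idx kk) : blockConst kk c p = c p.1 := rfl

/-- The block-constant vectors with `c_1 + ⋯ + c_ν = 0`; `B` vanishes on them. -/
def zeroSumBlockConst : Submodule ℝ (Spc kk) :=
  (LinearMap.ker (∑ j, LinearMap.proj j : (Fin ν → ℝ) →ₗ[ℝ] ℝ)).map (blockConst kk)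

variable {kk}

theorem inner_blockConst_left (c : Fin ν → ℝ) (t : Spc kk) :
    ⟪blockConst kk c, t⟫_ℝ = ∑ j, c j * ∑ i, t ⟨j, i⟩ := by
  simp [PiLp.inner_apply, Fintype.sum_sigma, blockConst_apply, Finset.mul_sum, mul_comm]

theorem norm_sq_blockConst (c : Fin ν → ℝ) : ‖blockConst kk c‖ ^ 2 = ∑ j, kk j * c j ^ 2 := by
  rw [← real_inner_self_eq_norm_sq, inner_blockConst_left]
  refine Finset.sum_congr rfl fun j _ => ?_
  simp only [blockConst_apply, Finset.sum_const, Finset.card_univ, Fintype.card_fin, nsmul_eq_mul]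
  ring

theorem linF_blockConst (m : MIdx kk) (c : Fin ν → ℝ) : linF kk m (blockConst kk c) = ∑ j, c j :=
  linF_apply kk m _

theorem linF_of_mem_zeroSumBlockConst {t : Spc kk} (ht : t ∈ zeroSumBlockConst kk)
    (m : MIdx kk) : linF kk m t = 0 := by
  obtain ⟨c, hc, rfl⟩ := ht
  simpa [linF_blockConst] using hc

theorem blockSum_eq_of_mem_zeroSumBlockConst_orthogonal {t : Spc kk}
    (ht : t ∈ (zeroSumBlockConst kk)ᗮ) (j l : Fin ν) : ∑ i, t ⟨j, i⟩ = ∑ i, t ⟨l, i⟩ := by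
  have hmem : blockConst kk (Pi.single j 1 - Pi.single l 1) ∈ zeroSumBlockConst kk :=
    Submodule.mem_map_of_mem (by simp)
  have hinner := (Submodule.mem_orthogonal _ _).1 ht _ hmem
  rw [inner_blockConst_left] at hinner
  simpa [sub_mul, Pi.single_apply, sub_eq_zero] using hinner

theorem blockConst_injective [∀ j, NeZero (kk j)] : Function.Injective (blockConst kk) :=
  fun _ _ h => funext fun j => congrArg (fun t : Spc kk => t ⟨j, 0⟩) h

theorem finrank_zeroSumBlockConst_add_one [NeZero ν] [∀ j, NeZero (kk j)] :
    Module.finrank ℝ (zeroSumBlockConst kk) + 1 = ν := by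
  have hne : (∑ j, LinearMap.proj j : Module.Dual ℝ (Fin ν → ℝ)) ≠ 0 := fun h => by
    simpa using LinearMap.congr_fun h (Pi.single 0 1)
  have hker := Module.Dual.finrank_ker_add_one_of_ne_zero hne
  rw [Module.finrank_fin_fun] at hker
  rw [zeroSumBlockConst, (Submodule.equivMapOfInjective _ blockConst_injective _).symm.finrank_eq]
  exact hker

end BlockConst

section SumSqLinF

open scoped BigOperators

variable (kk : Fin ν → ℕ)

/-- The number of multi-indices whose `j`-th entry is prescribed. -/
def fiberCard (j : Fin ν) : ℕ := ∏ l ∈ Finset.univ.erase j, kk l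

theorem mul_fiberCard (j : Fin ν) : kk j * fiberCard kk j = ∏ l, kk l :=
  Finset.mul_prod_erase _ _ (Finset.mem_univ j)

variable {kk}

theorem pow_le_fiberCard {x : ℝ} (hx : 0 ≤ x) (hkk : ∀ j, x ≤ kk j) (j : Fin ν) :
    x ^ (ν - 1) ≤ fiberCard kk j := by
  have hcard : (Finset.univ.erase j).card = ν - 1 := by simp
  rw [fiberCard, Nat.cast_prod, ← hcard, ← Finset.prod_const]
  exact Finset.prod_le_prod (fun _ _ => hx) fun l _ => hkk l

theorem fiberCard_le_pow {x : ℝ} (hkk : ∀ j, kk j ≤ x) (j : Fin ν) :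
    fiberCard kk j ≤ x ^ (ν - 1) := by
  have hcard : (Finset.univ.erase j).card = ν - 1 := by simp
  rw [fiberCard, Nat.cast_prod, ← hcard, ← Finset.prod_const]
  exact Finset.prod_le_prod (fun _ _ => by positivity) fun l _ => hkk l

variable (kk) in
/-- The block-constant vector with value `1 / k_j` on the `j`-th block: its inner product with `t`
is the sum of the block means of `t`. -/
def meanVector : Spc kk := blockConst kk fun j => (kk j : ℝ)⁻¹

theorem inner_meanVector_left (t : Spc kk) : ⟪meanVector kk, t⟫_ℝ = ∑ j, 𝔼 i, t ⟨j, i⟩ := by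
  simp [meanVector, inner_blockConst_left, Fintype.expect_eq_sum_div_card, div_eq_inv_mul]

theorem norm_sq_eq_sum_sum (t : Spc kk) : ‖t‖ ^ 2 = ∑ j, ∑ i, t ⟨j, i⟩ ^ 2 := by
  simp [EuclideanSpace.norm_sq_eq, Fintype.sum_sigma]

theorem sum_sq_linF_eq_card_mul_expect (t : Spc kk) :
    ∑ m, linF kk m t ^ 2 = (∏ j, kk j : ℕ) * 𝔼 m : MIdx kk, (∑ j, t ⟨j, m j⟩) ^ 2 := by
  have hcard : Fintype.card (MIdx kk) = ∏ j, kk j := by simp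
  simp only [linF_apply, ← hcard, Fintype.card_mul_expect]

variable [∀ j, NeZero (kk j)]

theorem card_mul_sum_expect_sq (t : Spc kk) :
    (∏ j, kk j : ℕ) * ∑ j, 𝔼 i, t ⟨j, i⟩ ^ 2 = ∑ j, fiberCard kk j * ∑ i, t ⟨j, i⟩ ^ 2 := by
  rw [Finset.mul_sum]
  refine Finset.sum_congr rfl fun j _ => ?_
  rw [← mul_fiberCard kk j, Fintype.expect_eq_sum_div_card, Fintype.card_fin, Nat.cast_mul]
  have : (kk j : ℝ) ≠ 0 := NeZero.ne _
  field_simp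

theorem mul_norm_sq_le_card_mul_sum_expect_sq {a : ℝ} (ha : ∀ j, a ≤ fiberCard kk j)
    (t : Spc kk) : a * ‖t‖ ^ 2 ≤ (∏ j, kk j : ℕ) * ∑ j, 𝔼 i, t ⟨j, i⟩ ^ 2 := by
  rw [card_mul_sum_expect_sq, norm_sq_eq_sum_sum, Finset.mul_sum]
  gcongr with j
  exact ha j

theorem card_mul_sum_expect_sq_le_mul_norm_sq {b : ℝ} (hb : ∀ j, fiberCard kk j ≤ b)
    (t : Spc kk) : (∏ j, kk j : ℕ) * ∑ j, 𝔼 i, t ⟨j, i⟩ ^ 2 ≤ b * ‖t‖ ^ 2 := by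
  rw [card_mul_sum_expect_sq, norm_sq_eq_sum_sum, Finset.mul_sum]
  gcongr with j
  exact hb j

theorem sum_sq_linF_le {b : ℝ} (hb : ∀ j, fiberCard kk j ≤ b) (t : Spc kk) :
    ∑ m, linF kk m t ^ 2 ≤ ν * b * ‖t‖ ^ 2 := by
  have hCauchy : 𝔼 m : MIdx kk, (∑ j, t ⟨j, m j⟩) ^ 2 ≤ ν * ∑ j, 𝔼 i, t ⟨j, i⟩ ^ 2 := calc
    _ ≤ 𝔼 m : MIdx kk, ν * ∑ j, t ⟨j, m j⟩ ^ 2 := by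
      gcongr with m
      simpa using sq_sum_le_card_mul_sum_sq (s := Finset.univ) (f := fun j => t ⟨j, m j⟩)
    _ = ν * ∑ j, 𝔼 i, t ⟨j, i⟩ ^ 2 := by
      simp only [← Finset.mul_expect, Finset.expect_sum_comm]
      congr! 2 with j
      exact expect_pi_eval (κ := fun j => Fin (kk j)) j fun i => t ⟨j, i⟩ ^ 2
  rw [sum_sq_linF_eq_card_mul_expect]
  calc _ ≤ ((∏ j, kk j : ℕ) : ℝ) * (ν * ∑ j, 𝔼 i, t ⟨j, i⟩ ^ 2) := by gcongr
    _ = ν * ((∏ j, kk j : ℕ) * ∑ j, 𝔼 i, t ⟨j, i⟩ ^ 2) := by ring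
    _ ≤ ν * (b * ‖t‖ ^ 2) :=
      mul_le_mul_of_nonneg_left (card_mul_sum_expect_sq_le_mul_norm_sq hb t) ν.cast_nonneg
    _ = ν * b * ‖t‖ ^ 2 := by ring

theorem sum_sq_linF_le_of_sum_expect_eq_zero {b : ℝ} (hb : ∀ j, fiberCard kk j ≤ b) {t : Spc kk}
    (ht : ∑ j, 𝔼 i, t ⟨j, i⟩ = 0) : ∑ m, linF kk m t ^ 2 ≤ b * ‖t‖ ^ 2 := by
  refine le_trans ?_ (card_mul_sum_expect_sq_le_mul_norm_sq hb t)
  rw [sum_sq_linF_eq_card_mul_expect, expect_pi_sq_sum_eval fun j i => t ⟨j, i⟩, ht,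
    zero_pow two_ne_zero, zero_add]
  gcongr
  exact sub_le_self _ (sq_nonneg _)

theorem mul_norm_sq_le_sum_sq_linF [NeZero ν] {a : ℝ} (ha : ∀ j, a ≤ fiberCard kk j) {t : Spc kk}
    (ht : t ∈ (zeroSumBlockConst kk)ᗮ) : a * ‖t‖ ^ 2 ≤ ∑ m, linF kk m t ^ 2 := by
  have hmean (j : Fin ν) : 𝔼 i, t ⟨j, i⟩ = (∑ i, t ⟨0, i⟩) * (kk j : ℝ)⁻¹ := by
    rw [Fintype.expect_eq_sum_div_card, Fintype.card_fin, div_eq_mul_inv,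
      blockSum_eq_of_mem_zeroSumBlockConst_orthogonal ht j 0]
  have hsq : ∑ j, (𝔼 i, t ⟨j, i⟩) ^ 2 ≤ (∑ j, 𝔼 i, t ⟨j, i⟩) ^ 2 := by
    simp only [hmean, mul_pow, ← Finset.mul_sum]
    gcongr
    exact Finset.sum_sq_le_sq_sum_of_nonneg fun _ _ => by positivity
  refine (mul_norm_sq_le_card_mul_sum_expect_sq ha t).trans ?_
  rw [sum_sq_linF_eq_card_mul_expect, expect_pi_sq_sum_eval fun j i => t ⟨j, i⟩,
    Finset.sum_sub_distrib]
  gcongr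
  linarith

theorem norm_sq_meanVector : ‖meanVector kk‖ ^ 2 = ∑ j, (kk j : ℝ)⁻¹ := by
  rw [meanVector, norm_sq_blockConst]
  refine Finset.sum_congr rfl fun j _ => ?_
  have : (kk j : ℝ) ≠ 0 := NeZero.ne _
  field_simp

theorem meanVector_ne_zero [NeZero ν] : meanVector kk ≠ 0 := fun h => by
  have hpos : 0 < ‖meanVector kk‖ ^ 2 := by
    rw [norm_sq_meanVector]
    exact Finset.sum_pos (fun j _ => by have := NeZero.pos (kk j); positivity) Finset.univ_nonempty
  simp [h] at hpos

theorem mul_norm_sq_le_sum_sq_linF_of_mem_span_meanVector {a : ℝ}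
    (ha : ∀ j, a ≤ fiberCard kk j) {t : Spc kk} (ht : t ∈ Submodule.span ℝ {meanVector kk}) :
    ν * a * ‖t‖ ^ 2 ≤ ∑ m, linF kk m t ^ 2 := by
  obtain ⟨c, rfl⟩ := Submodule.mem_span_singleton.1 ht
  set σ := ∑ j, (kk j : ℝ)⁻¹ with hσ
  have hcard : ν * a ≤ (∏ j, kk j : ℕ) * σ := calc
    ν * a = ∑ _j : Fin ν, a := by simp
    _ ≤ ∑ j, (fiberCard kk j : ℝ) := Finset.sum_le_sum fun j _ => ha j
    _ = (∏ j, kk j : ℕ) * σ := by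
      rw [hσ, Finset.mul_sum]
      refine Finset.sum_congr rfl fun j _ => ?_
      rw [← mul_fiberCard kk j, Nat.cast_mul, mul_comm (kk j : ℝ),
        mul_inv_cancel_right₀ (NeZero.ne _)]
  calc ν * a * ‖c • meanVector kk‖ ^ 2 = ν * a * (c ^ 2 * σ) := by
        rw [norm_smul, mul_pow, norm_sq_meanVector, Real.norm_eq_abs, sq_abs]
    _ ≤ (∏ j, kk j : ℕ) * σ * (c ^ 2 * σ) := by gcongr
    _ = ∑ m, linF kk m (c • meanVector kk) ^ 2 := by
      simp only [map_smul, smul_eq_mul, meanVector, linF_blockConst, ← hσ, Finset.sum_const,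
        Finset.card_univ, Fintype.card_pi, Fintype.card_fin, nsmul_eq_mul]
      ring

end SumSqLinF

section BmatEigenvalues

variable (kk : Fin ν → ℕ) (α : MIdx kk → ℝ)

theorem finrank_spc : Module.finrank ℝ (Spc kk) = ∑ j, kk j := by simp

/-- The eigenvalues of `B` in decreasing order, repeated according to multiplicity. -/
def bmatEigenvalues : Fin (∑ j, kk j) → ℝ :=
  (isSymmetric_bmat kk α).eigenvalues (finrank_spc kk)

variable {kk α}

theorem bmatEigenvalues_nonneg (hα : ∀ m, 0 ≤ α m) (i : Fin (∑ j, kk j)) :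
    0 ≤ bmatEigenvalues kk α i := by
  refine le_eigenvalues_of_forall_mem_submodule (isSymmetric_bmat kk α) (finrank_spc kk) (U := ⊤)
    (by simp) fun t _ => ?_
  simpa using mul_sum_sq_linF_le_inner_bmat t hα

variable [∀ j, NeZero (kk j)]

theorem bmatEigenvalues_le {R b : ℝ} (hR : 0 ≤ R) (hα : ∀ m, α m ≤ R)
    (hb : ∀ j, fiberCard kk j ≤ b) (i : Fin (∑ j, kk j)) :
    bmatEigenvalues kk α i ≤ R * (ν * b) := by
  refine eigenvalues_le_of_forall_mem_submodule (isSymmetric_bmat kk α) (finrank_spc kk) (U := ⊤)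
    (by simp) fun t _ => ?_
  calc ⟪Bmat kk α t, t⟫_ℝ ≤ R * ∑ m, linF kk m t ^ 2 := inner_bmat_le_mul_sum_sq_linF t hα
    _ ≤ R * (ν * b * ‖t‖ ^ 2) := by gcongr; exact sum_sq_linF_le hb t
    _ = R * (ν * b) * ‖t‖ ^ 2 := by ring

variable [NeZero ν]

theorem bmatEigenvalues_le_of_pos {R b : ℝ} (hR : 0 ≤ R) (hα : ∀ m, α m ≤ R)
    (hb : ∀ j, fiberCard kk j ≤ b) {i : Fin (∑ j, kk j)} (hi : 0 < (i : ℕ)) :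
    bmatEigenvalues kk α i ≤ R * b := by
  have hrank := (Submodule.span ℝ {meanVector kk}).finrank_add_finrank_orthogonal
  rw [finrank_span_singleton meanVector_ne_zero, finrank_spc] at hrank
  refine eigenvalues_le_of_forall_mem_submodule (isSymmetric_bmat kk α) (finrank_spc kk)
    (U := (Submodule.span ℝ {meanVector kk})ᗮ) (by omega) fun t ht => ?_
  rw [Submodule.mem_orthogonal_singleton_iff_inner_right, inner_meanVector_left] at ht
  calc ⟪Bmat kk α t, t⟫_ℝ ≤ R * ∑ m, linF kk m t ^ 2 := inner_bmat_le_mul_sum_sq_linF t hα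
    _ ≤ R * (b * ‖t‖ ^ 2) := by gcongr; exact sum_sq_linF_le_of_sum_expect_eq_zero hb ht
    _ = R * b * ‖t‖ ^ 2 := by ring

theorem le_bmatEigenvalues_of_eq_zero {r a : ℝ} (hr : 0 ≤ r) (hα : ∀ m, r ≤ α m)
    (ha : ∀ j, a ≤ fiberCard kk j) {i : Fin (∑ j, kk j)} (hi : (i : ℕ) = 0) :
    r * (ν * a) ≤ bmatEigenvalues kk α i := by
  refine le_eigenvalues_of_forall_mem_submodule (isSymmetric_bmat kk α) (finrank_spc kk)
    (U := Submodule.span ℝ {meanVector kk})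
    (by rw [finrank_span_singleton meanVector_ne_zero]; lia) fun t ht => ?_
  calc r * (ν * a) * ‖t‖ ^ 2 = r * (ν * a * ‖t‖ ^ 2) := by ring
    _ ≤ r * ∑ m, linF kk m t ^ 2 := by
      gcongr; exact mul_norm_sq_le_sum_sq_linF_of_mem_span_meanVector ha ht
    _ ≤ ⟪Bmat kk α t, t⟫_ℝ := mul_sum_sq_linF_le_inner_bmat t hα

theorem le_bmatEigenvalues_of_add_le {r a : ℝ} (hr : 0 ≤ r) (hα : ∀ m, r ≤ α m)
    (ha : ∀ j, a ≤ fiberCard kk j) {i : Fin (∑ j, kk j)} (hi : i + ν ≤ ∑ j, kk j) :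
    r * a ≤ bmatEigenvalues kk α i := by
  have hrank := (zeroSumBlockConst kk).finrank_add_finrank_orthogonal
  have hrankK := finrank_zeroSumBlockConst_add_one (kk := kk)
  rw [finrank_spc] at hrank
  refine le_eigenvalues_of_forall_mem_submodule (isSymmetric_bmat kk α) (finrank_spc kk)
    (U := (zeroSumBlockConst kk)ᗮ) (by omega) fun t ht => ?_
  calc r * a * ‖t‖ ^ 2 = r * (a * ‖t‖ ^ 2) := by ring
    _ ≤ r * ∑ m, linF kk m t ^ 2 := by gcongr; exact mul_norm_sq_le_sum_sq_linF ha ht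
    _ ≤ ⟪Bmat kk α t, t⟫_ℝ := mul_sum_sq_linF_le_inner_bmat t hα

theorem bmatEigenvalues_eq_zero (hα : ∀ m, 0 ≤ α m) {i : Fin (∑ j, kk j)}
    (hi : ∑ j, kk j < i + ν) : bmatEigenvalues kk α i = 0 := by
  have hrankK := finrank_zeroSumBlockConst_add_one (kk := kk)
  refine le_antisymm (eigenvalues_le_of_forall_mem_submodule (isSymmetric_bmat kk α)
    (finrank_spc kk) (U := zeroSumBlockConst kk) (by omega) fun t ht => ?_)
    (bmatEigenvalues_nonneg hα i)
  simp [inner_bmat_self, linF_of_mem_zeroSumBlockConst ht]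

end BmatEigenvalues

/-- The matrix `B` has an orthogonal basis of eigenvectors such that
exactly `ν−1` of them lie in the kernel of `B`, exactly one of the remaining eigenvectors
has eigenvalue between `r ω^{ν−1} ν k^{ν−1}` and `R ν k^{ν−1}`, and all other eigenvalues
lie between `r ω^{ν−1} k^{ν−1}` and `R k^{ν−1}`. -/
theorem statement3 (ν : ℕ) (hν : 2 ≤ ν) (kk : Fin ν → ℕ) (hkk : ∀ j, 2 ≤ kk j)
    (r R ω k : ℝ) (hr : 0 < r) (hrR : r ≤ R) (hω0 : 0 < ω) (hω1 : ω ≤ 1)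
    (hωk : 1 ≤ ω * k) (hlow : ∀ j, ω * k ≤ kk j) (hhigh : ∀ j, (kk j : ℝ) ≤ k)
    (α : MIdx kk → ℝ) (hα1 : ∀ m, r ≤ α m) (hα2 : ∀ m, α m ≤ R) :
    ∃ (v : Fin (∑ j, kk j) → Spc kk) (lam : Fin (∑ j, kk j) → ℝ),
      (∀ i, v i ≠ 0) ∧
      (∀ i i', i ≠ i' → ⟪v i, v i'⟫_ℝ = 0) ∧
      (∀ i, Bmat kk α (v i) = lam i • v i) ∧
      Submodule.span ℝ (Set.range v) = ⊤ ∧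
      (∀ i : Fin (∑ j, kk j), (i : ℕ) < ν - 1 → v i ∈ LinearMap.ker (Bmat kk α)) ∧
      (∀ i : Fin (∑ j, kk j), (i : ℕ) = ν - 1 →
        r * ω ^ (ν - 1) * ν * k ^ (ν - 1) ≤ lam i ∧ lam i ≤ R * ν * k ^ (ν - 1)) ∧
      (∀ i : Fin (∑ j, kk j), ν - 1 < (i : ℕ) →
        r * ω ^ (ν - 1) * k ^ (ν - 1) ≤ lam i ∧ lam i ≤ R * k ^ (ν - 1)) := by
  have : NeZero ν := ⟨by omega⟩
  have (j : Fin ν) : NeZero (kk j) := ⟨by have := hkk j; omega⟩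
  have hν_le : ν ≤ ∑ j, kk j := by
    simpa using Finset.sum_le_sum fun j (_ : j ∈ Finset.univ) => NeZero.one_le (n := kk j)
  have hR : 0 ≤ R := hr.le.trans hrR
  have hα0 (m : MIdx kk) : 0 ≤ α m := hr.le.trans (hα1 m)
  have hcard_ge := pow_le_fiberCard (zero_le_one.trans hωk) hlow
  have hcard_le := fiberCard_le_pow hhigh
  obtain ⟨σ, hσlt, hσle⟩ := exists_perm_fin_val_eq_sub (d := ∑ j, kk j) (n := ν - 1) (by omega)
  let b := (isSymmetric_bmat kk α).eigenvectorBasis (finrank_spc kk)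
  have hb (i) : Bmat kk α (b i) = bmatEigenvalues kk α i • b i :=
    (isSymmetric_bmat kk α).apply_eigenvectorBasis (finrank_spc kk) i
  refine ⟨b ∘ σ, bmatEigenvalues kk α ∘ σ, fun i => b.orthonormal.ne_zero _,
    fun i i' hii' => b.orthonormal.2 (σ.injective.ne hii'), fun i => hb _, ?_,
    fun i hi => ?_, fun i hi => ⟨?_, ?_⟩, fun i hi => ⟨?_, ?_⟩⟩
  · rw [σ.surjective.range_comp, ← b.coe_toBasis, b.toBasis.span_eq]
  · have hzero := bmatEigenvalues_eq_zero hα0 (i := σ i) (by rw [hσlt i hi]; omega)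
    rw [LinearMap.mem_ker, Function.comp_apply, hb, hzero, zero_smul]
  · exact (le_bmatEigenvalues_of_eq_zero hr.le hα1 hcard_ge
      (by rw [hσle i hi.ge]; omega)).trans_eq' (by ring)
  · exact (bmatEigenvalues_le hR hα2 hcard_le (σ i)).trans_eq (by ring)
  · exact (le_bmatEigenvalues_of_add_le hr.le hα1 hcard_ge
      (by rw [hσle i hi.le]; omega)).trans_eq' (by ring)
  · exact bmatEigenvalues_le_of_pos hR hα2 hcard_le (by rw [hσle i hi.le]; omega)
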